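/- arXiv:2205.11204 — 3 statements merged into one kernel-verified Lean document; each statement's English description precedes it below -/
import Mathlib

section
/- For every infinite set X ⊆ ℕ the series ∑_{n ∈ f⁻¹[X]} 1/n diverges, where f is the factorial-interval map. -/
/-- The factorial-interval map: `facMap n = k` for the unique `k ≥ 1` with
`k! < n ≤ (k+1)!`, and `facMap n = 0` for `n ≤ 1`. -/
def facMap (n : ℕ) : ℕ :=
  if n ≤ 1 then 0 else Nat.findGreatest (fun k => Nat.factorial k < n) n

/-!
On the fibre `(k!, (k+1)!]` of `facMap` over any `k ≥ 1`, the reciprocals already sum to at least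
`((k+1)! - k!) / (k+1)! = k / (k+1) ≥ 1/2`. An infinite `X` selects such fibres arbitrarily far
out, whereas block sums of a convergent series tend to `0` along blocks that leave every finite set.
-/

open Filter Finset
open scoped Nat Topology

theorem tendsto_sum_zero_of_summable_of_eventually_notMem {ι κ G : Type*} [AddCommGroup G]
    [TopologicalSpace G] [IsTopologicalAddGroup G] {f : ι → G} {l : Filter κ} {t : κ → Finset ι}
    (hf : Summable f) (ht : ∀ i, ∀ᶠ k in l, i ∉ t k) :
    Tendsto (fun k => ∑ i ∈ t k, f i) l (𝓝 0) := by
  intro U hU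
  obtain ⟨s, hs⟩ := hf.vanishing hU
  have havoid : ∀ᶠ k in l, ∀ i ∈ s, i ∉ t k := (eventually_all_finset s).2 fun i _ => ht i
  exact havoid.mono fun k hk => hs (t k) (disjoint_right.2 hk)

theorem sub_div_le_sum_Ioc_one_div {K : Type*} [Field K] [LinearOrder K] [IsStrictOrderedRing K]
    (a b : ℕ) : ((b : K) - a) / b ≤ ∑ n ∈ Ioc a b, (1 : K) / n := by
  have hterm : ∀ n ∈ Ioc a b, (1 : K) / b ≤ 1 / n := fun n hn => by
    obtain ⟨han, hnb⟩ := mem_Ioc.1 hn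
    exact one_div_le_one_div_of_le (Nat.cast_pos.2 (Nat.zero_lt_of_lt han)) (Nat.cast_le.2 hnb)
  calc ((b : K) - a) / b
      ≤ ((b - a : ℕ) : K) * (1 / b) := by
        rw [← div_eq_mul_one_div]
        gcongr
        exact sub_le_iff_le_add.2 (mod_cast le_tsub_add)
    _ = #(Ioc a b) • ((1 : K) / b) := by rw [Nat.card_Ioc, nsmul_eq_mul]
    _ ≤ ∑ n ∈ Ioc a b, (1 : K) / n := card_nsmul_le_sum _ _ _ hterm

theorem half_le_sum_Ioc_factorial {K : Type*} [Field K] [LinearOrder K] [IsStrictOrderedRing K]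
    {k : ℕ} (hk : k ≠ 0) : (1 / 2 : K) ≤ ∑ n ∈ Ioc k ! (k + 1)!, (1 : K) / n := by
  have hdouble : (2 * k ! : K) ≤ (k + 1)! := by
    exact_mod_cast Nat.mul_le_mul_right k ! (show 2 ≤ k + 1 by lia)
  have hpos : (0 : K) < (k + 1)! := Nat.cast_pos.2 (k + 1).factorial_pos
  calc (1 / 2 : K) ≤ (((k + 1)! : K) - k !) / (k + 1)! := by
        rw [div_le_div_iff₀ two_pos hpos]
        linarith
    _ ≤ ∑ n ∈ Ioc k ! (k + 1)!, (1 : K) / n := sub_div_le_sum_Ioc_one_div _ _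

theorem facMap_eq_of_mem_Ioc {k n : ℕ} (hn : n ∈ Ioc k ! (k + 1)!) : facMap n = k := by
  obtain ⟨hlt, hle⟩ := mem_Ioc.1 hn
  have hn_gt_one : 1 < n := lt_of_le_of_lt k.factorial_pos hlt
  have hkn : k ≤ n := k.self_le_factorial.trans hlt.le
  rw [facMap, if_neg hn_gt_one.not_ge, Nat.findGreatest_eq_iff]
  exact ⟨hkn, fun _ => hlt, fun m hkm _ => (hle.trans (Nat.factorial_le hkm)).not_gt⟩

theorem eventually_notMem_Ioc_factorial (n : ℕ) : ∀ᶠ k in atTop, n ∉ Ioc k ! (k + 1)! := by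
  filter_upwards [eventually_ge_atTop n] with k hnk hn
  exact (hnk.trans k.self_le_factorial).not_gt (mem_Ioc.1 hn).1

theorem facMap_preimage_harmonic_diverges (X : Set ℕ) (hX : X.Infinite) :
    ¬ Summable (Set.indicator (facMap ⁻¹' X) (fun n : ℕ => (1 : ℝ) / n)) := by
  intro hsum
  have hblocks := tendsto_sum_zero_of_summable_of_eventually_notMem hsum
    eventually_notMem_Ioc_factorial
  have hsmall := hblocks.eventually_lt_const (one_half_pos (α := ℝ))
  obtain ⟨k, hkX, hk_small, hk_ne⟩ := ((Nat.frequently_atTop_iff_infinite.2 hX).and_eventually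
    (hsmall.and (eventually_ne_atTop 0))).exists
  have hfibre : ∀ n ∈ Ioc k ! (k + 1)!, n ∈ facMap ⁻¹' X := fun n hn => by
    rwa [Set.mem_preimage, facMap_eq_of_mem_Ioc hn]
  rw [sum_congr rfl fun n hn => Set.indicator_of_mem (hfibre n hn) _] at hk_small
  exact hk_small.not_ge (half_le_sum_Ioc_factorial hk_ne)
end

section
/- Butterfly points exist in ℕ*: there are a point q ∈ ℕ* and disjoint sets A, B ⊆ ℕ* such that the set of accumulation points of A in ℕ* intersected with the set of accumulation points of B in ℕ* equals {q}. (An accumulation point of a set S is a point every neighbourhood of which meets S in a point other than itself.) -/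
/-- A free ultrafilter on `ℕ`: one containing no finite set. -/
def IsFreeUF (u : Ultrafilter ℕ) : Prop := ∀ A ∈ u, Set.Infinite A

/-- `ℕ* = βℕ \ ℕ`: the subspace of free ultrafilters on `ℕ`. -/
abbrev NstarSpace : Type := {u : Ultrafilter ℕ // IsFreeUF u}

/-!
Split an infinite set `α` into infinitely many infinite columns `f⁻¹{i}`, `i ∈ ι`, choose a free
ultrafilter `u i` on each of them, and let `p` be a free ultrafilter on `ι`. The map `βf : βα → βι`
sends `u i` to the isolated point `i`, so a point `x` in the closure of the `u i` has to be their
limit along `βf x`. Hence the limit `q` of the `u i` along `p` is the only point of that closure in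
the fibre `(βf)⁻¹{p}`. This fibre is closed and contains no `u i`, and `q` is not isolated in it:
each `S ∈ q` contains a section of `f` over a member of `p`, and the image of `p` under the section
is a point of the fibre different from `q`, since a section meets each column in one point. So `q`
is the only common accumulation point of `{u i | i ∈ ι}` and the fibre.
-/

open Filter Set Topology

/-- A butterfly point of a topological space: the only common accumulation point of some two
disjoint sets. -/
def IsButterflyPoint {X : Type*} [TopologicalSpace X] (q : X) : Prop :=
  ∃ A B : Set X, Disjoint A B ∧ derivedSet A ∩ derivedSet B = {q}

/-- A free ultrafilter on an arbitrary type, as a predicate that unfolds to `IsFreeUF` over `ℕ`. -/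
def IsFreeUltrafilter {α : Type*} (u : Ultrafilter α) : Prop := ∀ A ∈ u, A.Infinite

section DerivedSet

variable {X Y : Type*} [TopologicalSpace X] [TopologicalSpace Y]

theorem mem_derivedSet_iff_mem_closure_diff {A : Set X} {x : X} :
    x ∈ derivedSet A ↔ x ∈ closure (A \ {x}) := by
  rw [mem_derivedSet, accPt_principal_iff_nhdsWithin, mem_closure_iff_nhdsWithin_neBot]

theorem derivedSet_preimage_of_isEmbedding {e : X → Y} (he : IsEmbedding e) {A : Set Y}
    (hA : A ⊆ range e) : derivedSet (e ⁻¹' A) = e ⁻¹' derivedSet A := by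
  ext x
  rw [mem_preimage, mem_derivedSet_iff_mem_closure_diff, mem_derivedSet_iff_mem_closure_diff,
    he.closure_eq_preimage_closure_image, mem_preimage, image_sdiff he.injective,
    image_preimage_eq_of_subset hA, image_singleton]

theorem isButterflyPoint_subtype {P : X → Prop} {A B : Set X} {q : Subtype P}
    (hA : ∀ x ∈ A, P x) (hB : ∀ x ∈ B, P x) (hAB : Disjoint A B)
    (hq : derivedSet A ∩ derivedSet B = {q.1}) : IsButterflyPoint q := by
  refine ⟨Subtype.val ⁻¹' A, Subtype.val ⁻¹' B, hAB.preimage _, ?_⟩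
  rw [derivedSet_preimage_of_isEmbedding .subtypeVal (by simpa [subset_def] using hA),
    derivedSet_preimage_of_isEmbedding .subtypeVal (by simpa [subset_def] using hB),
    ← preimage_inter, hq, ← image_singleton, Subtype.val_injective.preimage_image]

end DerivedSet

section FreeUltrafilter

variable {α β : Type*}

theorem isFreeUltrafilter_hyperfilter [Infinite α] : IsFreeUltrafilter (hyperfilter α) :=
  fun _ hA hfin => hfin.notMem_hyperfilter hA

theorem IsFreeUltrafilter.of_map {f : α → β} {u : Ultrafilter α}
    (h : IsFreeUltrafilter (u.map f)) : IsFreeUltrafilter u :=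
  fun _ hA => (h _ (image_mem_map hA)).of_image f

theorem IsFreeUltrafilter.ne_pure {u : Ultrafilter α} (h : IsFreeUltrafilter u) (a : α) :
    u ≠ pure a := by
  rintro rfl
  exact h {a} (mem_singleton a) (finite_singleton a)

end FreeUltrafilter

section StoneCech

variable {X α β ι : Type*}

theorem ultrafilter_mem_closure_iff {A : Set (Ultrafilter α)} {x : Ultrafilter α} :
    x ∈ closure A ↔ ∀ S ∈ x, ∃ y ∈ A, S ∈ y := by
  rw [ultrafilterBasis_is_basis.mem_closure_iff, ultrafilterBasis, forall_mem_range]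
  simp only [Set.Nonempty, mem_inter_iff, mem_ofPred_eq, and_comm]

theorem continuous_ultrafilter_map (f : α → β) :
    Continuous (Ultrafilter.map f : Ultrafilter α → Ultrafilter β) := by
  refine continuous_generateFrom_iff.2 ?_
  rintro _ ⟨S, rfl⟩
  exact ultrafilter_isOpen_basic (f ⁻¹' S)

theorem tendsto_ultrafilter_bind (u : ι → Ultrafilter α) (p : Ultrafilter ι) :
    Tendsto u p (𝓝 (p.bind u)) :=
  (ultrafilter_converges_iff (u := p.map u)).2 rfl

theorem tendsto_of_mem_closure_range [TopologicalSpace X] {g : X → Ultrafilter ι}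
    (hg : Continuous g) {a : ι → X} (ha : ∀ i, g (a i) = pure i) {x : X}
    (hx : x ∈ closure (range a)) : Tendsto a (g x) (𝓝 x) := by
  have hne : (comap a (𝓝 x)).NeBot :=
    comap_neBot_iff_frequently.2 (mem_closure_iff_frequently.1 hx)
  have hle : comap a (𝓝 x) ≤ g x := calc
    comap a (𝓝 x) ≤ comap a (comap g (𝓝 (g x))) := comap_mono (hg.tendsto x).le_comap
    _ = comap pure (𝓝 (g x)) := by rw [comap_comap, show g ∘ a = pure from funext ha]
    _ ≤ g x := ultrafilter_comap_pure_nhds (g x)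
  exact tendsto_iff_comap.2 ((g x).unique hle).ge

end StoneCech

section Columns

variable {α ι : Type*} {f : α → ι} {u : ι → Ultrafilter α} {p : Ultrafilter ι}

theorem map_bind_eq_of_map_eq_pure (hu : ∀ i, (u i).map f = pure i) :
    (p.bind u).map f = p := by
  have hlim : Tendsto (fun i => (u i).map f) p (𝓝 ((p.bind u).map f)) :=
    ((continuous_ultrafilter_map f).tendsto _).comp (tendsto_ultrafilter_bind u p)
  simp only [hu] at hlim
  exact tendsto_nhds_unique hlim p.tendsto_pure_self

theorem eq_bind_of_mem_closure_range (hu : ∀ i, (u i).map f = pure i) {x : Ultrafilter α}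
    (hx : x ∈ closure (range u)) : x = (x.map f).bind u :=
  tendsto_nhds_unique (tendsto_of_mem_closure_range (continuous_ultrafilter_map f) hu hx)
    (tendsto_ultrafilter_bind u _)

theorem disjoint_range_fiber (hu : ∀ i, (u i).map f = pure i) (hp : IsFreeUltrafilter p) :
    Disjoint (range u) {x | x.map f = p} := by
  rw [disjoint_left]
  rintro _ ⟨i, rfl⟩ hi
  exact hp.ne_pure i (hi.symm.trans (hu i))

theorem bind_mem_derivedSet_range (hu : ∀ i, (u i).map f = pure i) (hp : IsFreeUltrafilter p) :
    p.bind u ∈ derivedSet (range u) := by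
  have hq : p.bind u ∉ range u := fun h =>
    (disjoint_range_fiber hu hp).notMem_of_mem_left h (map_bind_eq_of_map_eq_pure hu)
  rw [mem_derivedSet_iff_mem_closure_diff, sdiff_singleton_eq_self hq]
  exact mem_closure_of_tendsto (tendsto_ultrafilter_bind u p) (.of_forall mem_range_self)

theorem fiber_mem_of_map_eq_pure {v : Ultrafilter α} {i : ι} (hv : v.map f = pure i) :
    f ⁻¹' {i} ∈ v :=
  Ultrafilter.mem_map.1 (hv ▸ mem_singleton i)

theorem exists_rightInverse_eventually_mem (hu : ∀ i, (u i).map f = pure i) {S : Set α}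
    (hS : S ∈ p.bind u) : ∃ s : ι → α, Function.RightInverse s f ∧ ∀ᶠ i in p, s i ∈ S := by
  have hcol (i : ι) : ∃ a, f a = i ∧ (S ∈ u i → a ∈ S) := by
    have hfi : f ⁻¹' {i} ∈ u i := fiber_mem_of_map_eq_pure (hu i)
    by_cases hSi : S ∈ u i
    · obtain ⟨a, hai, haS⟩ := (u i).nonempty_of_mem (inter_mem hfi hSi)
      exact ⟨a, hai, fun _ => haS⟩
    · obtain ⟨a, hai⟩ := (u i).nonempty_of_mem hfi
      exact ⟨a, hai, fun h => absurd h hSi⟩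
  choose s hsf hsS using hcol
  have hSp : ∀ᶠ i in p, S ∈ u i := hS
  exact ⟨s, hsf, hSp.mono hsS⟩

theorem map_ne_bind_of_rightInverse (hu : ∀ i, (u i).map f = pure i)
    (hfree : ∀ i, IsFreeUltrafilter (u i)) {s : ι → α} (hs : Function.RightInverse s f) :
    p.map s ≠ p.bind u := by
  intro h
  have hrange : range s ∈ p.bind u := h ▸ range_mem_map
  obtain ⟨i, hi⟩ : ∃ i, range s ∈ u i := p.nonempty_of_mem hrange
  refine hfree i _ (inter_mem hi (fiber_mem_of_map_eq_pure (hu i)))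
    ((finite_singleton (s i)).subset ?_)
  rintro _ ⟨⟨j, rfl⟩, hj⟩
  exact congrArg s ((hs j).symm.trans hj)

theorem bind_mem_derivedSet_fiber (hu : ∀ i, (u i).map f = pure i)
    (hfree : ∀ i, IsFreeUltrafilter (u i)) : p.bind u ∈ derivedSet {x | x.map f = p} := by
  rw [mem_derivedSet_iff_mem_closure_diff, ultrafilter_mem_closure_iff]
  intro S hS
  obtain ⟨s, hs, hsS⟩ := exists_rightInverse_eventually_mem hu hS
  have hmap : (p.map s).map f = p := by
    rw [Ultrafilter.map_map, hs.comp_eq_id, Ultrafilter.map_id]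
  exact ⟨p.map s, ⟨hmap, map_ne_bind_of_rightInverse hu hfree hs⟩, hsS⟩

theorem derivedSet_range_inter_derivedSet_fiber (hu : ∀ i, (u i).map f = pure i)
    (hfree : ∀ i, IsFreeUltrafilter (u i)) (hp : IsFreeUltrafilter p) :
    derivedSet (range u) ∩ derivedSet {x | x.map f = p} = {p.bind u} := by
  refine Subset.antisymm ?_ (singleton_subset_iff.2
    ⟨bind_mem_derivedSet_range hu hp, bind_mem_derivedSet_fiber hu hfree⟩)
  rintro x ⟨hxu, hxp⟩
  have hclosed : IsClosed {x : Ultrafilter α | x.map f = p} :=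
    isClosed_singleton.preimage (continuous_ultrafilter_map f)
  have hx : x.map f = p := (isClosed_iff_derivedSet_subset _).1 hclosed hxp
  exact hx ▸ eq_bind_of_mem_closure_range hu (derivedSet_subset_closure _ hxu)

end Columns

theorem exists_isFreeUltrafilter_map_eq_pure (α : Type*) [Infinite α] :
    ∃ (f : α → α) (u : α → Ultrafilter α),
      ∀ i, (u i).map f = pure i ∧ IsFreeUltrafilter (u i) := by
  obtain ⟨e⟩ : Nonempty (α × α ≃ α) := Cardinal.eq.1 (by simp)
  refine ⟨fun a => (e.symm a).1, fun i => (hyperfilter α).map fun k => e (i, k),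
    fun i => ⟨?_, .of_map (f := fun a => (e.symm a).2) ?_⟩⟩
  · exact Ultrafilter.coe_injective (by simp [Function.comp_def, Filter.map_const])
  · simpa [Ultrafilter.map_map, Function.comp_def] using isFreeUltrafilter_hyperfilter

theorem butterfly_points_exist_general (α : Type*) [Infinite α] :
    ∃ q : {u : Ultrafilter α // IsFreeUltrafilter u}, IsButterflyPoint q := by
  obtain ⟨f, u, hfu⟩ := exists_isFreeUltrafilter_map_eq_pure α
  have hu (i : α) : (u i).map f = pure i := (hfu i).1
  have hfree (i : α) : IsFreeUltrafilter (u i) := (hfu i).2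
  have hp : IsFreeUltrafilter (hyperfilter α) := isFreeUltrafilter_hyperfilter
  have hfiber (x : Ultrafilter α) (hx : x.map f = hyperfilter α) : IsFreeUltrafilter x :=
    .of_map (hx ▸ hp)
  exact ⟨⟨(hyperfilter α).bind u, hfiber _ (map_bind_eq_of_map_eq_pure hu)⟩,
    isButterflyPoint_subtype (forall_mem_range.2 hfree) hfiber (disjoint_range_fiber hu hp)
      (derivedSet_range_inter_derivedSet_fiber hu hfree hp)⟩

theorem butterfly_points_exist :
    ∃ (q : NstarSpace) (A B : Set NstarSpace), Disjoint A B ∧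
      {x : NstarSpace | AccPt x (Filter.principal A)} ∩
        {x : NstarSpace | AccPt x (Filter.principal B)} = {q} :=
  butterfly_points_exist_general ℕ
end

section
/- An ultrafilter can be homeomorphic to at most 𝔠 many other ultrafilters: identify each subset A of ℕ with its characteristic function χ_A in the Cantor space 2^ℕ (product topology), and for an ultrafilter p on ℕ let P = {χ_A : A ∈ p} ⊆ 2^ℕ with the subspace topology. Then for every free ultrafilter p on ℕ, the set of free ultrafilters q on ℕ such that Q = {χ_A : A ∈ q} is homeomorphic to P has cardinality at most 𝔠 = 2^ℵ₀. -/
/-- The copy `{χ_A : A ∈ p}` of an ultrafilter `p` inside the Cantor space `2^ℕ`. -/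
def ufSet (p : Ultrafilter ℕ) : Set (ℕ → Bool) := {f : ℕ → Bool | {n : ℕ | f n = true} ∈ p}

/-!
A continuous map into a Hausdorff space is determined by its values on a dense set, so a separable
space has at most `𝔠 ^ ℵ₀ = 𝔠` continuous maps to the Cantor space, and hence at most `𝔠` continuous
images in it. An ultrafilter is recovered from its copy, and every copy homeomorphic to that of `p`
is a continuous image of the latter, which is separable because the Cantor space is second countable.
-/

universe u v

open Cardinal TopologicalSpace

theorem ufSet_injective : Function.Injective ufSet := by
  classical
  intro p q hpq
  ext A
  simpa [ufSet] using Set.ext_iff.mp hpq fun n => decide (n ∈ A)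

section ContinuousMap

variable {X : Type u} {Y : Type v} [TopologicalSpace X] [TopologicalSpace Y] [T2Space Y]

theorem mk_continuousMap_le_of_dense {s : Set X} (hs : Dense s) :
    #C(X, Y) ≤ lift.{u} #Y ^ lift.{v} #s := by
  have restrict_injective : Function.Injective fun (f : C(X, Y)) (x : s) => f x := fun f g hfg =>
    DFunLike.coe_injective <|
      f.continuous.ext_on hs g.continuous fun x hx => congrFun hfg ⟨x, hx⟩
  simpa using mk_le_of_injective restrict_injective

theorem mk_continuousMap_le_power_aleph0 [SeparableSpace X] [Nonempty Y] :
    #C(X, Y) ≤ lift.{u} (#Y ^ ℵ₀) := by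
  obtain ⟨s, s_countable, s_dense⟩ := exists_countable_dense X
  calc
    #C(X, Y) ≤ lift.{u} #Y ^ lift.{v} #s := mk_continuousMap_le_of_dense s_dense
    _ ≤ lift.{u} #Y ^ ℵ₀ :=
      power_le_power_left (by simp) (lift_le_aleph0.mpr s_countable.le_aleph0)
    _ = lift.{u} (#Y ^ ℵ₀) := by simp

theorem mk_range_range_continuousMap_le_power_aleph0 [SeparableSpace X] [Nonempty Y] :
    #(Set.range fun f : C(X, Y) => Set.range f) ≤ #Y ^ ℵ₀ := by
  rw [← lift_le.{max u v}]
  calc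
    lift.{max u v} #(Set.range fun f : C(X, Y) => Set.range f) ≤ lift.{v} #C(X, Y) :=
      mk_range_le_lift
    _ ≤ lift.{v} (lift.{u} (#Y ^ ℵ₀)) := lift_le.mpr mk_continuousMap_le_power_aleph0
    _ = lift.{max u v} (#Y ^ ℵ₀) := lift_lift _

end ContinuousMap

theorem at_most_continuum_homeomorphic_ultrafilters_general (X : Type*) [TopologicalSpace X]
    [SeparableSpace X] :
    #{q : Ultrafilter ℕ | ∃ f : C(X, ufSet q), Function.Surjective f} ≤ 𝔠 := by
  let images : Set (Set (ℕ → Bool)) := Set.range fun f : C(X, ℕ → Bool) => Set.range f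
  have subset_preimage :
      {q : Ultrafilter ℕ | ∃ f : C(X, ufSet q), Function.Surjective f} ⊆ ufSet ⁻¹' images := by
    rintro q ⟨f, hf⟩
    exact ⟨.comp ⟨Subtype.val, continuous_subtype_val⟩ f,
      (hf.range_comp Subtype.val).trans Subtype.range_coe⟩
  calc
    #{q : Ultrafilter ℕ | ∃ f : C(X, ufSet q), Function.Surjective f} ≤ #(ufSet ⁻¹' images) :=
      mk_le_mk_of_subset subset_preimage
    _ ≤ #images := mk_preimage_of_injective ufSet images ufSet_injective
    _ ≤ #(ℕ → Bool) ^ ℵ₀ := mk_range_range_continuousMap_le_power_aleph0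
    _ = 𝔠 := by simp

theorem at_most_continuum_homeomorphic_ultrafilters (p : Ultrafilter ℕ) (hp : IsFreeUF p) :
    Cardinal.mk {q : Ultrafilter ℕ | IsFreeUF q ∧ Nonempty (↥(ufSet q) ≃ₜ ↥(ufSet p))}
      ≤ Cardinal.continuum := by
  refine (mk_le_mk_of_subset ?_).trans
    (at_most_continuum_homeomorphic_ultrafilters_general (ufSet p))
  exact fun q ⟨_, ⟨e⟩⟩ => ⟨⟨e.symm, e.symm.continuous⟩, e.symm.surjective⟩
end
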